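/- Let f : ℝ → ℝ be twice continuously differentiable, let α ∈ (1,2), and let x, c ∈ ℝ. If f″(t) ≤ L for all t then D^α_c f(x) ≤ (L/Γ(3−α)) · |x−c|^{2−α}; if f″(t) ≥ μ for all t then D^α_c f(x) ≥ (μ/Γ(3−α)) · |x−c|^{2−α}. -/

import Mathlib

/-- The Caputo fractional derivative of order `α ∈ (1,2)` with terminal `c`. -/
noncomputable def caputoHigh (α c : ℝ) (f : ℝ → ℝ) (x : ℝ) : ℝ :=
  (Real.sign (x - c) / Real.Gamma (2 - α)) *
    ∫ t in c..x, deriv (deriv f) t / |x - t| ^ (α - 1)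

/-!
The sign in front of the integral undoes the orientation of `∫_c^x`, so `D^α_c f(x)` is
`Γ(2 - α)⁻¹` times the integral of `f″` against the positive weight `|x - t|^(1 - α)` over the
unoriented interval between `c` and `x`. A bound on `f″` therefore factors out of the integral,
and the total mass of the weight is `|x - c|^(2 - α) / (2 - α)`, where
`(2 - α) Γ(2 - α) = Γ(3 - α)`.
-/

open MeasureTheory Set
open scoped Interval

section WeightedIntegral

variable {X : Type*} [MeasurableSpace X] {ν : Measure X} {s : Set X} {g w : X → ℝ} {K : ℝ}

theorem setIntegral_mul_le_mul_setIntegral (hs : MeasurableSet s)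
    (hgw : IntegrableOn (fun t => g t * w t) s ν) (hw : IntegrableOn w s ν)
    (hw₀ : ∀ t ∈ s, 0 ≤ w t) (hg : ∀ t ∈ s, g t ≤ K) :
    ∫ t in s, g t * w t ∂ν ≤ K * ∫ t in s, w t ∂ν := by
  rw [← integral_const_mul]
  exact setIntegral_mono_on hgw (hw.const_mul K) hs fun t ht =>
    mul_le_mul_of_nonneg_right (hg t ht) (hw₀ t ht)

theorem mul_setIntegral_le_setIntegral_mul (hs : MeasurableSet s)
    (hgw : IntegrableOn (fun t => g t * w t) s ν) (hw : IntegrableOn w s ν)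
    (hw₀ : ∀ t ∈ s, 0 ≤ w t) (hg : ∀ t ∈ s, K ≤ g t) :
    K * ∫ t in s, w t ∂ν ≤ ∫ t in s, g t * w t ∂ν := by
  rw [← integral_const_mul]
  exact setIntegral_mono_on (hw.const_mul K) hgw hs fun t ht =>
    mul_le_mul_of_nonneg_right (hg t ht) (hw₀ t ht)

end WeightedIntegral

theorem sign_sub_smul_intervalIntegral {E : Type*} [NormedAddCommGroup E] [NormedSpace ℝ E]
    (F : ℝ → E) (a b : ℝ) (ν : Measure ℝ) :
    Real.sign (b - a) • ∫ t in a..b, F t ∂ν = ∫ t in Ι a b, F t ∂ν := by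
  rw [intervalIntegral.intervalIntegral_eq_integral_uIoc]
  rcases lt_trichotomy a b with hab | rfl | hba
  · simp [Real.sign_of_pos (sub_pos.2 hab), hab.le]
  · simp
  · simp [Real.sign_of_neg (sub_neg.2 hba), hba.not_ge]

section PowerKernel

variable {r : ℝ}

theorem intervalIntegrable_abs_rpow (hr : -1 < r) (a b : ℝ) :
    IntervalIntegrable (fun u : ℝ => |u| ^ r) volume a b := by
  refine intervalIntegrable_of_even (fun u => by rw [abs_neg]) fun h hh => ?_
  refine (intervalIntegral.intervalIntegrable_rpow' hr).congr fun u hu => ?_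
  rw [uIoc_of_le hh.le] at hu
  simp only [abs_of_pos hu.1]

theorem integral_abs_rpow_of_nonneg (hr : -1 < r) {h : ℝ} (hh : 0 ≤ h) :
    ∫ u in 0..h, |u| ^ r = h ^ (r + 1) / (r + 1) := by
  calc ∫ u in 0..h, |u| ^ r
      = ∫ u in 0..h, u ^ r := by
        refine intervalIntegral.integral_congr fun u hu => ?_
        rw [uIcc_of_le hh] at hu
        simp only [abs_of_nonneg hu.1]
    _ = h ^ (r + 1) / (r + 1) := by
        rw [integral_rpow (Or.inl hr), Real.zero_rpow (by linarith), sub_zero]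

theorem integrableOn_uIoc_abs_sub_rpow (hr : -1 < r) (a b : ℝ) :
    IntegrableOn (fun t => |b - t| ^ r) (Ι a b) := by
  rw [← intervalIntegrable_iff]
  simpa using (intervalIntegrable_abs_rpow hr (b - a) 0).comp_sub_left b

theorem setIntegral_uIoc_abs_sub_rpow (hr : -1 < r) (a b : ℝ) :
    ∫ t in Ι a b, |b - t| ^ r = |b - a| ^ (r + 1) / (r + 1) := by
  rcases le_total a b with hab | hba
  · rw [uIoc_of_le hab, ← intervalIntegral.integral_of_le hab,
      intervalIntegral.integral_comp_sub_left (fun u => |u| ^ r), sub_self,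
      integral_abs_rpow_of_nonneg hr (sub_nonneg.2 hab), abs_of_nonneg (sub_nonneg.2 hab)]
  · simp_rw [abs_sub_comm b]
    rw [uIoc_of_ge hba, ← intervalIntegral.integral_of_le hba,
      intervalIntegral.integral_comp_sub_right (fun u => |u| ^ r), sub_self,
      integral_abs_rpow_of_nonneg hr (sub_nonneg.2 hba), abs_of_nonneg (sub_nonneg.2 hba)]

end PowerKernel

theorem caputoHigh_eq_setIntegral (α c : ℝ) (f : ℝ → ℝ) (x : ℝ) :
    caputoHigh α c f x =
      (∫ t in Ι c x, deriv (deriv f) t * |x - t| ^ (1 - α)) / Real.Gamma (2 - α) := by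
  have hkernel (t : ℝ) : deriv (deriv f) t / |x - t| ^ (α - 1) =
      deriv (deriv f) t * |x - t| ^ (1 - α) := by
    rw [div_eq_mul_inv, ← Real.rpow_neg (abs_nonneg _), neg_sub]
  simp_rw [caputoHigh, hkernel]
  rw [← sign_sub_smul_intervalIntegral, smul_eq_mul, div_mul_eq_mul_div]

theorem Gamma_three_sub {α : ℝ} (hα : α ≠ 2) :
    Real.Gamma (3 - α) = (2 - α) * Real.Gamma (2 - α) := by
  rw [← Real.Gamma_add_one (sub_ne_zero.2 hα.symm)]
  ring_nf

theorem continuousAt_deriv_deriv {𝕜 E : Type*} [NontriviallyNormedField 𝕜]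
    [NormedAddCommGroup E] [NormedSpace 𝕜 E] {f : 𝕜 → E} {t : 𝕜} (hf : ContDiffAt 𝕜 2 f t) :
    ContinuousAt (deriv (deriv f)) t := by
  have hf' : ContDiffAt 𝕜 1 (deriv f) t := hf.derivWithin (by norm_num)
  have hf'' : ContDiffAt 𝕜 0 (deriv (deriv f)) t := hf'.derivWithin (by norm_num)
  exact hf''.continuousAt

theorem caputoHigh_bounds_general {f : ℝ → ℝ} {α x c L μ : ℝ} (hα : α < 2)
    (hf : ∀ t ∈ [[c, x]], ContDiffAt ℝ 2 f t) :
    ((∀ t ∈ Ι c x, deriv (deriv f) t ≤ L) →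
      caputoHigh α c f x ≤ L / Real.Gamma (3 - α) * |x - c| ^ (2 - α)) ∧
    ((∀ t ∈ Ι c x, μ ≤ deriv (deriv f) t) →
      μ / Real.Gamma (3 - α) * |x - c| ^ (2 - α) ≤ caputoHigh α c f x) := by
  have hr : -1 < 1 - α := by linarith
  have hcont : ContinuousOn (deriv (deriv f)) [[c, x]] := fun t ht =>
    (continuousAt_deriv_deriv (hf t ht)).continuousWithinAt
  have hw : IntegrableOn (fun t => |x - t| ^ (1 - α)) (Ι c x) :=
    integrableOn_uIoc_abs_sub_rpow hr c x
  have hgw : IntegrableOn (fun t => deriv (deriv f) t * |x - t| ^ (1 - α)) (Ι c x) :=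
    ((intervalIntegrable_iff.2 hw).continuousOn_mul hcont).def'
  have hmass : ∫ t in Ι c x, |x - t| ^ (1 - α) = |x - c| ^ (2 - α) / (2 - α) := by
    rw [setIntegral_uIoc_abs_sub_rpow hr, show 1 - α + 1 = 2 - α by ring]
  have hw₀ : ∀ t ∈ Ι c x, 0 ≤ |x - t| ^ (1 - α) := fun t _ => by positivity
  have hΓ : 0 ≤ Real.Gamma (2 - α) := (Real.Gamma_pos_of_pos (sub_pos.2 hα)).le
  have hconst (K : ℝ) : K / Real.Gamma (3 - α) * |x - c| ^ (2 - α) =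
      (K * ∫ t in Ι c x, |x - t| ^ (1 - α)) / Real.Gamma (2 - α) := by
    rw [hmass, Gamma_three_sub hα.ne]
    field_simp
  rw [caputoHigh_eq_setIntegral, hconst, hconst]
  exact ⟨fun hL => div_le_div_of_nonneg_right
      (setIntegral_mul_le_mul_setIntegral measurableSet_uIoc hgw hw hw₀ hL) hΓ,
    fun hμ => div_le_div_of_nonneg_right
      (mul_setIntegral_le_setIntegral_mul measurableSet_uIoc hgw hw hw₀ hμ) hΓ⟩

/-- bounds on the order-`α ∈ (1,2)` Caputo derivative from bounds on the
second derivative. -/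
theorem caputoHigh_bounds (f : ℝ → ℝ) (hf : ContDiff ℝ 2 f) (α : ℝ)
    (hα : α ∈ Set.Ioo (1 : ℝ) 2) (x c L μ : ℝ) :
    ((∀ t, deriv (deriv f) t ≤ L) →
      caputoHigh α c f x ≤ L / Real.Gamma (3 - α) * |x - c| ^ (2 - α)) ∧
    ((∀ t, μ ≤ deriv (deriv f) t) →
      μ / Real.Gamma (3 - α) * |x - c| ^ (2 - α) ≤ caputoHigh α c f x) :=
  (caputoHigh_bounds_general hα.2 fun _ _ => hf.contDiffAt).imp
    (fun h H => h fun t _ => H t) (fun h H => h fun t _ => H t)
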